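/- arXiv:1804.09191 — 2 statements merged into one kernel-verified Lean document; each statement's English description precedes it below -/
import Mathlib

section
/- Suppose u, v ∈ B = ℂ[x,y] generate B as a ℂ-algebra. Let k ≥ 1 be an integer, let g be a univariate polynomial over ℂ of degree at most k−1 with g(0) = 1, set F = u·vᵏ + g(v), and suppose P ∈ B satisfies vᵏ·P = v − 16v² + 4vF − 8vF² + F³ − F⁴. If all coefficients of P are real (so P ∈ A = ℝ[x,y]), then some unit of the quotient ring A/PA is not the residue class of a real constant (i.e., (A/PA)* ≠ ℝ*). -/
open MvPolynomial

/-!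
With `w = 4v + F²` and `T = F − 2w`, the relation defining `P` reads `4 vᵏ P = w − T²`. Modulo `P`
this gives `F = T + 2T²` and `v = −T³(1 + T)`, so the curve `P = 0` is parametrized by `t = T`.
Since `F ≡ 1` modulo `v` and both `v` and `F` are multiples of `T` modulo `P`, the class of `T` is
a unit of `B/PB`.

Let `σ` be complex conjugation of coefficients. The polynomial `T · σ T` is real and, `P` being
real, its class is a unit of `A/PA`. It is not a real constant. Otherwise `T · σ T ≡ c ≠ 0`, and
under the homomorphism `φ : B → ℂ(t)` with `v ↦ −t³(1 + t)`, `u ↦ (t + 2t² − g(v)) / vᵏ`, which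
kills `P`, conjugation becomes `t ↦ c / t`: we get `φ (σ T) = c / t` and
`φ (σ v) = −c³ (t + c) / t⁴`. At the place `t = ∞` the function `φ v` has a pole, whereas `φ u`
(by `deg g < k`) and `φ (σ v)` do not.

On the other hand `σ u, σ v` is again a pair of generators of `B`. For two generating pairs `u, v`
and `U, V`, the curve `V = 0` is a line with coordinate ring `ℂ[s]`, on which `u` is either constant
or a nonconstant polynomial over which `ℂ[s]` is integral. Hence either `V` is a nonconstant affine
function of `u`, or `V` is, up to a unit, monic of positive degree in `v` over `ℂ[u]`
(`coordinate_dichotomy`). For `V = σ v`, the second case makes `φ v` integral over the valuation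
ring at infinity, which is absurd; the first is excluded at `t = 0`, where `φ (σ v)` has a pole of
order `4` and `φ u` a pole of order `3k`.
-/

/-! ### Pairs of generators of `ℂ[x, y]` -/

/-- A generating pair `u, v` of `ℂ[x, y]` is algebraically independent because the transcendence
degree is `2`, so the images of `u` and `v` under an algebra homomorphism may be prescribed freely. -/
theorem exists_algHom_of_generators {u v : MvPolynomial (Fin 2) ℂ}
    (huv : Algebra.adjoin ℂ {u, v} = ⊤) {S : Type*} [CommRing S] [Algebra ℂ S] (a b : S) :
    ∃ f : MvPolynomial (Fin 2) ℂ →ₐ[ℂ] S, f u = a ∧ f v = b := by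
  have hr : Algebra.adjoin ℂ (Set.range ![u, v]) = ⊤ := by
    rw [← huv]; congr 1; ext x; simp [eq_comm, or_comm]
  have halg : Algebra.IsAlgebraic (Algebra.adjoin ℂ (Set.range ![u, v]))
      (MvPolynomial (Fin 2) ℂ) := by
    refine ⟨fun x => ?_⟩
    have hx : x ∈ Algebra.adjoin ℂ (Set.range ![u, v]) := by rw [hr]; trivial
    exact isAlgebraic_algebraMap
      (⟨x, hx⟩ : Algebra.adjoin ℂ (Set.range ![u, v]))
  have hind : AlgebraicIndependent ℂ ![u, v] :=
    (Algebra.IsAlgebraic.isTranscendenceBasis_of_le_trdeg_of_finite (R := ℂ) ![u, v]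
      (by simp [MvPolynomial.trdeg_of_isDomain])).1
  have hbij : Function.Bijective (aeval ![u, v] : MvPolynomial (Fin 2) ℂ →ₐ[ℂ] _) := by
    refine ⟨hind, ?_⟩
    rw [← AlgHom.range_eq_top, ← Algebra.adjoin_range_eq_range_aeval, hr]
  let e := AlgEquiv.ofBijective _ hbij
  refine ⟨(aeval ![a, b]).comp (e.symm : _ →ₐ[ℂ] _), ?_, ?_⟩
  · have : e.symm u = X 0 := by rw [AlgEquiv.symm_apply_eq]; simp [e]
    simp [this]
  · have : e.symm v = X 1 := by rw [AlgEquiv.symm_apply_eq]; simp [e]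
    simp [this]

/-- `ℂ[s]` is integral over `ℂ[α]` for every nonconstant polynomial `α`. -/
theorem isIntegralElem_aeval {α : Polynomial ℂ} (hα : α.natDegree ≠ 0) (β : Polynomial ℂ) :
    (Polynomial.aeval α : Polynomial ℂ →ₐ[ℂ] Polynomial ℂ).toRingHom.IsIntegralElem β := by
  have hX : (Polynomial.aeval α : Polynomial ℂ →ₐ[ℂ] Polynomial ℂ).toRingHom.IsIntegralElem
      Polynomial.X := by
    have h0 : α ≠ 0 := by rintro rfl; simp at hα
    have hm := Polynomial.monic_mul_leadingCoeff_inv h0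
    set γ := α * Polynomial.C α.leadingCoeff⁻¹ with hγ
    have hd : γ.natDegree ≠ 0 := by
      rw [hγ, Polynomial.natDegree_mul_C (by simpa using h0)]; exact hα
    -- `γ` is `α` made monic, and `s` is a root of the monic polynomial `γ(Y) − γ(s)` over `ℂ[α]`.
    refine ⟨γ.map Polynomial.C - Polynomial.C
      (Polynomial.X * Polynomial.C α.leadingCoeff⁻¹), ?_, ?_⟩
    · refine (hm.map Polynomial.C).sub_of_left ?_
      rw [Polynomial.degree_map_eq_of_injective Polynomial.C_injective]
      refine Polynomial.degree_C_le.trans_lt ?_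
      rwa [← Polynomial.natDegree_pos_iff_degree_pos, Nat.pos_iff_ne_zero]
    · have : (Polynomial.aeval α : Polynomial ℂ →ₐ[ℂ] Polynomial ℂ).toRingHom.comp
        Polynomial.C = Polynomial.C := by ext; simp
      rw [Polynomial.eval₂_sub, Polynomial.eval₂_map, this, Polynomial.eval₂_C_X]
      simp [hγ]
      ring
  have hC (c : ℂ) : (Polynomial.aeval α : Polynomial ℂ →ₐ[ℂ] Polynomial ℂ).toRingHom.IsIntegralElem
      (Polynomial.C c) := by
    have := RingHom.isIntegralElem_map
      (Polynomial.aeval α : Polynomial ℂ →ₐ[ℂ] Polynomial ℂ).toRingHom (x := Polynomial.C c)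
    simpa using this
  induction β using Polynomial.induction_on' with
  | add p q hp hq => exact hp.add _ hq
  | monomial n c =>
    rw [← Polynomial.C_mul_X_pow_eq_monomial]
    refine (hC c).mul _ ?_
    induction n with
    | zero => simpa using hC 1
    | succ n ih => rw [pow_succ]; exact ih.mul _ hX

/-- If `u, v` and `U, V` both generate `ℂ[x, y]`, then either `V` is an affine function of `u`
(written `a V = u − b`), or `V = q(u, v)` for some `q ∈ ℂ[X][Y]` of positive degree in `Y` whose
leading coefficient in `Y` is a unit. -/
theorem coordinate_dichotomy {u v U V : MvPolynomial (Fin 2) ℂ}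
    (huv : Algebra.adjoin ℂ {u, v} = ⊤) (hUV : Algebra.adjoin ℂ {U, V} = ⊤) :
    (∃ a b : ℂ, a ≠ 0 ∧ C a * V = u - C b) ∨
    ∃ q : Polynomial (Polynomial ℂ), IsUnit q.leadingCoeff ∧ q.natDegree ≠ 0 ∧
      V = q.eval₂ (Polynomial.aeval u).toRingHom v := by
  -- `e` and `E` are the mutually inverse identifications of `ℂ[x, y]` with `ℂ[X][Y]`
  -- sending `u` to `X` and `v` to `Y`.
  obtain ⟨e, heu, hev⟩ := exists_algHom_of_generators huv
    (Polynomial.C Polynomial.X : Polynomial (Polynomial ℂ)) Polynomial.X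
  let E : Polynomial (Polynomial ℂ) →+* MvPolynomial (Fin 2) ℂ :=
    Polynomial.eval₂RingHom (Polynomial.aeval u).toRingHom v
  have hE : ∀ x, E (e x) = x := by
    intro x
    have hx : x ∈ Algebra.adjoin ℂ {u, v} := by rw [huv]; trivial
    induction hx using Algebra.adjoin_induction with
    | mem x hx =>
      rcases hx with rfl | hx
      · simp [heu, E]
      · rw [Set.mem_singleton_iff] at hx
        subst hx
        simp [hev, E]
    | algebraMap r =>
      rw [AlgHom.commutes]
      simp [E, Polynomial.algebraMap_apply]
    | add x y _ _ hx hy => rw [map_add, map_add, hx, hy]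
    | mul x y _ _ hx hy => rw [map_mul, map_mul, hx, hy]
  have heE : ∀ q, e (E q) = q := by
    have : (e : _ →+* Polynomial (Polynomial ℂ)).comp E = RingHom.id _ := by
      refine Polynomial.ringHom_ext' (Polynomial.ringHom_ext (fun c => ?_) ?_) ?_
      · have : e (C c) = algebraMap ℂ _ c := e.commutes c
        simp [E, MvPolynomial.algebraMap_eq, this, Polynomial.algebraMap_apply]
      · simp [E, heu]
      · simp [E, hev]
    intro q
    exact congrArg (fun f => f q) this
  -- `ψ` is restriction to the line `V = 0`, with coordinate `U`; its kernel is generated by `V`.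
  obtain ⟨ψ, hψU, hψV⟩ := exists_algHom_of_generators hUV (Polynomial.X : Polynomial ℂ) 0
  have hker : ∀ x, ψ x = 0 → V ∣ x := by
    have h : (Ideal.Quotient.mkₐ ℂ (Ideal.span {V})) =
        ((Ideal.Quotient.mkₐ ℂ (Ideal.span {V})).comp (Polynomial.aeval U)).comp ψ := by
      refine AlgHom.ext_of_adjoin_eq_top hUV ?_
      rintro x (rfl | hx)
      · simp [hψU]
      · rw [Set.mem_singleton_iff] at hx
        subst hx
        simp [hψV]
    intro x hx
    have := congrArg (fun f => f x) h
    simpa [hx, Ideal.Quotient.eq_zero_iff_mem, Ideal.mem_span_singleton] using this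
  have hVu : ¬ IsUnit V := fun h => by simpa [hψV] using h.map ψ
  by_cases hα : (ψ u).natDegree = 0
  -- `V` divides the prime element `u − b`.
  · left
    obtain ⟨b, hb⟩ := Polynomial.natDegree_eq_zero.mp hα
    have hb' : ψ (u - C b) = 0 := by
      have : ψ (C b) = algebraMap ℂ _ b := ψ.commutes b
      rw [map_sub, this, ← hb]; simp
    obtain ⟨h, hh⟩ := hker _ hb'
    have he : Polynomial.C (Polynomial.X - Polynomial.C b) = e V * e h := by
      have : e (C b) = algebraMap ℂ _ b := e.commutes b
      rw [← map_mul, ← hh, map_sub e, heu, this, Polynomial.algebraMap_apply]; simp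
    have hirr : Irreducible (Polynomial.C (Polynomial.X - Polynomial.C b)) :=
      (Polynomial.prime_C_iff.mpr (Polynomial.prime_X_sub_C b)).irreducible
    rcases hirr.isUnit_or_isUnit he with h1 | h1
    · exact absurd (by simpa [hE] using h1.map E) hVu
    · have h2 : IsUnit h := by simpa [hE] using h1.map E
      obtain ⟨a, ha, rfl⟩ := MvPolynomial.isUnit_iff_eq_C_of_isReduced.mp h2
      exact ⟨a, b, ha.ne_zero, by rw [hh, mul_comm]⟩
  -- `V` divides a polynomial in `u, v` that is monic in `v`, so its leading coefficient is a unit.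
  · right
    obtain ⟨q, hq, hq0⟩ := isIntegralElem_aeval hα (ψ v)
    have h1 : ψ (E q) = 0 := by
      rw [← hq0]
      have : (ψ : _ →+* Polynomial ℂ).comp (Polynomial.aeval u).toRingHom =
          (Polynomial.aeval (ψ u) : Polynomial ℂ →ₐ[ℂ] Polynomial ℂ).toRingHom := by
        refine Polynomial.ringHom_ext (fun c => ?_) ?_
        · have : ψ (C c) = algebraMap ℂ _ c := ψ.commutes c
          simp [MvPolynomial.algebraMap_eq, this]
        · simp
      rw [← this]
      exact Polynomial.hom_eval₂ q (Polynomial.aeval u).toRingHom (ψ : _ →+* Polynomial ℂ) v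
    obtain ⟨h, hh⟩ := hker _ h1
    have h2 : q = e V * e h := by rw [← map_mul, ← hh, heE]
    have hu : IsUnit (e V).leadingCoeff := by
      refine isUnit_of_mul_isUnit_left (y := (e h).leadingCoeff) ?_
      rw [← Polynomial.leadingCoeff_mul, ← h2, hq.leadingCoeff]; exact isUnit_one
    refine ⟨e V, hu, fun hd => hVu ?_, (hE V).symm⟩
    obtain ⟨p, hp⟩ := Polynomial.natDegree_eq_zero.mp hd
    rw [← hp, Polynomial.leadingCoeff_C] at hu
    rw [← hE V, ← hp]
    exact (hu.map Polynomial.C).map E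

/-! ### Valuations and orders of vanishing -/

/-- If `a` and `q(a, b)` lie in a valuation ring containing `ℂ`, and `q ∈ ℂ[X][Y]` has positive
degree in `Y` with unit leading coefficient, then `b` is integral over that ring, hence in it. -/
theorem valuation_le_one_of_eval₂_le_one {K Γ : Type*} [Field K] [Algebra ℂ K]
    [LinearOrderedCommGroupWithZero Γ] (w : Valuation K Γ)
    (hw : ∀ c : ℂ, w (algebraMap ℂ K c) ≤ 1) {a b : K} (ha : w a ≤ 1)
    {q : Polynomial (Polynomial ℂ)} (hq : IsUnit q.leadingCoeff) (hd : q.natDegree ≠ 0)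
    (h : w (q.eval₂ (Polynomial.aeval a).toRingHom b) ≤ 1) : w b ≤ 1 := by
  have hp (p : Polynomial ℂ) : w (Polynomial.aeval a p) ≤ 1 := by
    rw [Polynomial.aeval_eq_sum_range]
    refine w.map_sum_le fun i _ => ?_
    rw [Algebra.smul_def, map_mul, map_pow]
    exact mul_le_one' (hw _) (pow_le_one' ha _)
  have hlc : w (Polynomial.aeval a q.leadingCoeff) = 1 := by
    obtain ⟨r, hr⟩ := hq.exists_right_inv
    refine le_antisymm (hp _) ?_
    have h1 : w (Polynomial.aeval a q.leadingCoeff) * w (Polynomial.aeval a r) = 1 := by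
      rw [← map_mul, ← map_mul, hr, map_one, map_one]
    calc (1 : Γ) = _ := h1.symm
      _ ≤ w (Polynomial.aeval a q.leadingCoeff) * 1 := by gcongr; exact hp r
      _ = _ := mul_one _
  by_contra! hb
  rw [Polynomial.eval₂_eq_sum_range, Finset.sum_range_succ] at h
  have hlt : w (∑ i ∈ Finset.range q.natDegree,
      (Polynomial.aeval a).toRingHom (q.coeff i) * b ^ i) <
      w ((Polynomial.aeval a).toRingHom (q.coeff q.natDegree) * b ^ q.natDegree) := by
    have h1 : w ((Polynomial.aeval a).toRingHom (q.coeff q.natDegree) * b ^ q.natDegree) =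
        w b ^ q.natDegree := by
      rw [map_mul, map_pow]
      change w (Polynomial.aeval a q.leadingCoeff) * _ = _
      rw [hlc, one_mul]
    rw [h1]
    refine w.map_sum_lt (pow_ne_zero _ (zero_lt_one.trans hb).ne') fun i hi => ?_
    rw [map_mul, map_pow]
    exact mul_lt_of_le_one_of_lt (hp _) (pow_lt_pow_right₀ hb (Finset.mem_range.mp hi))
  rw [w.map_add_eq_of_lt_right hlt, map_mul, map_pow] at h
  change w (Polynomial.aeval a q.leadingCoeff) * _ ≤ 1 at h
  rw [hlc, one_mul] at h
  exact absurd h (not_le.mpr (one_lt_pow₀ hb hd))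

/-- Uniqueness of the order of vanishing at `0`. -/
theorem eq_of_X_pow_mul_eq {m n : ℕ} {A B : Polynomial ℂ}
    (h : Polynomial.X ^ m * A = Polynomial.X ^ n * B)
    (hA : A.eval 0 ≠ 0) (hB : B.eval 0 ≠ 0) : m = n := by
  have key : ∀ {m n : ℕ} {A B : Polynomial ℂ}, Polynomial.X ^ m * A = Polynomial.X ^ n * B →
      A.eval 0 ≠ 0 → n ≤ m := by
    intro m n A B h hA
    by_contra! hlt
    obtain ⟨d, rfl⟩ := Nat.exists_eq_add_of_lt hlt
    rw [pow_add, pow_add, mul_assoc, mul_assoc] at h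
    have := mul_left_cancel₀ (pow_ne_zero _ Polynomial.X_ne_zero) h
    apply hA
    rw [this]; simp
  exact le_antisymm (key h.symm hB) (key h hA)

/-! ### Conjugation of coefficients -/

theorem exists_real_of_conj_eq {x : MvPolynomial (Fin 2) ℂ}
    (hx : MvPolynomial.map (starRingEnd ℂ) x = x) :
    ∃ y : MvPolynomial (Fin 2) ℝ, MvPolynomial.map (algebraMap ℝ ℂ) y = x := by
  have : x ∈ Set.range (MvPolynomial.map (σ := Fin 2) (algebraMap ℝ ℂ)) := by
    rw [MvPolynomial.mem_range_map_iff_coeffs_subset]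
    intro c hc
    obtain ⟨d, -, rfl⟩ := MvPolynomial.mem_coeffs_iff.mp hc
    have h := congrArg (MvPolynomial.coeff d) hx
    rw [MvPolynomial.coeff_map] at h
    obtain ⟨r, hr⟩ := Complex.conj_eq_iff_real.mp h
    exact ⟨r, hr.symm⟩
  exact this

theorem conj_map_real (y : MvPolynomial (Fin 2) ℝ) :
    MvPolynomial.map (starRingEnd ℂ) (MvPolynomial.map (algebraMap ℝ ℂ) y) =
      MvPolynomial.map (algebraMap ℝ ℂ) y := by
  have h : (starRingEnd ℂ).comp (algebraMap ℝ ℂ) = algebraMap ℝ ℂ := by ext; simp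
  rw [MvPolynomial.map_map, h]

theorem conj_conj_poly (x : MvPolynomial (Fin 2) ℂ) :
    MvPolynomial.map (starRingEnd ℂ) (MvPolynomial.map (starRingEnd ℂ) x) = x := by
  rw [MvPolynomial.map_map]
  convert MvPolynomial.map_id x
  ext; simp

/-- Divisibility in `ℂ[x, y]` between real polynomials descends to `ℝ[x, y]`: average the quotient
with its conjugate. -/
theorem dvd_of_map_dvd {p r : MvPolynomial (Fin 2) ℝ}
    (h : MvPolynomial.map (algebraMap ℝ ℂ) p ∣ MvPolynomial.map (algebraMap ℝ ℂ) r) : p ∣ r := by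
  obtain ⟨Q, hQ⟩ := h
  have hQ' := congrArg (MvPolynomial.map (starRingEnd ℂ)) hQ
  rw [map_mul, conj_map_real, conj_map_real] at hQ'
  obtain ⟨y, hy⟩ := exists_real_of_conj_eq
    (x := C (1 / 2) * (Q + MvPolynomial.map (starRingEnd ℂ) Q)) (by
      rw [map_mul, map_add, conj_conj_poly, MvPolynomial.map_C, add_comm Q]
      simp [Complex.conj_ofNat])
  refine ⟨y, MvPolynomial.map_injective (algebraMap ℝ ℂ) (algebraMap ℝ ℂ).injective ?_⟩
  rw [map_mul, hy]
  have h2 : (C (1 / 2) : MvPolynomial (Fin 2) ℂ) * 2 = 1 := by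
    rw [show (2 : MvPolynomial (Fin 2) ℂ) = C 2 from (map_ofNat C 2).symm, ← C_mul]
    norm_num
  linear_combination (C (1 / 2)) * hQ + (C (1 / 2)) * hQ' -
    MvPolynomial.map (algebraMap ℝ ℂ) r * h2

theorem adjoin_conj_eq_top {u v : MvPolynomial (Fin 2) ℂ}
    (huv : Algebra.adjoin ℂ {u, v} = ⊤) :
    Algebra.adjoin ℂ {MvPolynomial.map (starRingEnd ℂ) u, MvPolynomial.map (starRingEnd ℂ) v}
      = ⊤ := by
  rw [eq_top_iff]
  intro x _
  rw [← conj_conj_poly x]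
  generalize MvPolynomial.map (starRingEnd ℂ) x = z
  have hz : z ∈ Algebra.adjoin ℂ {u, v} := by rw [huv]; trivial
  induction hz using Algebra.adjoin_induction with
  | mem z hz =>
    apply Algebra.subset_adjoin
    rcases hz with rfl | hz
    · simp
    · rw [Set.mem_singleton_iff] at hz; simp [hz]
  | algebraMap r =>
    rw [MvPolynomial.algebraMap_eq, MvPolynomial.map_C]
    exact Subalgebra.algebraMap_mem _ (starRingEnd ℂ r)
  | add x y _ _ hx hy => rw [map_add]; exact add_mem hx hy
  | mul x y _ _ hx hy => rw [map_mul]; exact mul_mem hx hy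

/-! ### The curve `P = 0` -/

/-- On `P = 0` one has `v = −T³(1 + T)` for `T = F − 2(4v + F²)`. -/
theorem dvd_param_relation {R : Type*} [CommRing R] {k : ℕ} {v F P : R}
    (hP : v ^ k * P = v - 16 * v ^ 2 + 4 * v * F - 8 * v * F ^ 2 + F ^ 3 - F ^ 4) :
    P ∣ v + (F - 2 * (4 * v + F ^ 2)) ^ 3 + (F - 2 * (4 * v + F ^ 2)) ^ 4 := by
  refine ⟨v ^ k * (1 - 4 * (F - 2 * (4 * v + F ^ 2)) - 8 * (F - 2 * (4 * v + F ^ 2)) ^ 2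
    - 16 * (v ^ k * P)), ?_⟩
  have h : P * (v ^ k * (1 - 4 * (F - 2 * (4 * v + F ^ 2)) - 8 * (F - 2 * (4 * v + F ^ 2)) ^ 2
    - 16 * (v ^ k * P))) = (v ^ k * P) * (1 - 4 * (F - 2 * (4 * v + F ^ 2))
    - 8 * (F - 2 * (4 * v + F ^ 2)) ^ 2 - 16 * (v ^ k * P)) := by ring
  rw [h, hP]
  ring

/-- `T = F − 2(4v + F²)` is invertible modulo `P`: at a common zero of `T` and `P` both `v` and `F`
would vanish, while `F = g(0) = 1` wherever `v = 0`. -/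
theorem exists_inverse_mod {R : Type*} [CommRing R] [Algebra ℂ R] {k : ℕ} (hk : 1 ≤ k)
    {g : Polynomial ℂ} (hg0 : g.eval 0 = 1) {u v F P : R}
    (hF : F = u * v ^ k + Polynomial.aeval v g)
    (hP : v ^ k * P = v - 16 * v ^ 2 + 4 * v * F - 8 * v * F ^ 2 + F ^ 3 - F ^ 4) :
    ∃ S Q : R, (F - 2 * (4 * v + F ^ 2)) * S + P * Q = 1 := by
  obtain ⟨E, hE⟩ := dvd_param_relation hP
  obtain ⟨g₁, hg₁⟩ : Polynomial.X ∣ g - 1 := by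
    rw [Polynomial.X_dvd_iff, Polynomial.coeff_zero_eq_eval_zero]; simp [hg0]
  have hgv : Polynomial.aeval v g = 1 + v * Polynomial.aeval v g₁ := by
    rw [← sub_add_cancel g 1, hg₁]; simp [add_comm]
  obtain ⟨j, rfl⟩ := Nat.exists_eq_add_of_le' hk
  rw [hgv] at hF
  set m := u * v ^ j + Polynomial.aeval v g₁ with hm
  have hFm : F = 1 + v * m := by rw [hF, hm]; ring
  set T := F - 2 * (4 * v + F ^ 2) with hT
  refine ⟨1 + 2 * T + (T ^ 2 + T ^ 3) * m, 8 * v ^ (j + 1) - E * m, ?_⟩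
  have h4 : F = T + 2 * T ^ 2 + 8 * (v ^ (j + 1) * P) := by rw [hP, hT]; ring
  linear_combination hFm - h4 + m * hE

/-- There is no second generating pair `U, V` for which `V = −T'³(1 + T')` modulo `P`, with `T'`
a unit modulo `P` and `T T'` congruent to a constant. In the application `U, V, T'` are the
conjugates of `u, v, T`. -/
theorem no_conj_inverse {u v U V F P T' : MvPolynomial (Fin 2) ℂ}
    (huv : Algebra.adjoin ℂ {u, v} = ⊤) (hUV : Algebra.adjoin ℂ {U, V} = ⊤)
    {k : ℕ} (hk : 1 ≤ k) {g : Polynomial ℂ} (hgdeg : g.natDegree ≤ k - 1) (hg0 : Polynomial.eval 0 g = 1)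
    (hF : F = u * v ^ k + Polynomial.aeval v g)
    (hP : v ^ k * P = v - 16 * v ^ 2 + 4 * v * F - 8 * v * F ^ 2 + F ^ 3 - F ^ 4)
    (hV : P ∣ V + T' ^ 3 + T' ^ 4) {S' : MvPolynomial (Fin 2) ℂ}
    (hS' : P ∣ T' * S' - 1) {c : ℂ}
    (hT' : P ∣ (F - 2 * (4 * v + F ^ 2)) * T' - C c) : False := by
  classical
  let ι : Polynomial ℂ →ₐ[ℂ] RatFunc ℂ := Algebra.algHom ℂ (Polynomial ℂ) (RatFunc ℂ)
  have hι : Function.Injective ι := RatFunc.algebraMap_injective ℂ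
  set t : RatFunc ℂ := ι Polynomial.X with ht
  have ht0 : t ≠ 0 := by
    rw [ht, Ne, map_eq_zero_iff ι hι]; exact Polynomial.X_ne_zero
  -- `x` is the polynomial in `t` parametrizing `v`.
  let x : Polynomial ℂ := -(Polynomial.X ^ 3 * (1 + Polynomial.X))
  have hx0 : x ≠ 0 := by
    intro h
    have := congrArg (Polynomial.eval 1) h
    norm_num [x] at this
  have hιx : ι x = -(t ^ 3 * (1 + t)) := by simp [x, ht]
  have hιx0 : ι x ≠ 0 := by rwa [Ne, map_eq_zero_iff ι hι]
  obtain ⟨φ, hφu, hφv⟩ := exists_algHom_of_generators huv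
    ((t + 2 * t ^ 2 - ι (g.comp x)) / (ι x) ^ k) (ι x)
  have hgx : Polynomial.aeval (ι x) g = ι (g.comp x) := by
    rw [Polynomial.aeval_algHom_apply, Polynomial.comp_eq_aeval]
  have hu' : φ u * (ι x) ^ k = t + 2 * t ^ 2 - ι (g.comp x) := by
    rw [hφu, div_mul_cancel₀ _ (pow_ne_zero _ hιx0)]
  have hφF : φ F = t + 2 * t ^ 2 := by
    rw [hF, map_add, map_mul, map_pow, ← Polynomial.aeval_algHom_apply, hφv, hu', hgx]; ring
  have hφP : φ P = 0 := by
    have h := congrArg φ hP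
    simp only [map_mul, map_pow, map_sub, map_add, map_ofNat, hφF, hφv] at h
    have h0 : (ι x) ^ k * φ P = 0 := by rw [h, hιx]; ring
    exact (mul_eq_zero.mp h0).resolve_left (pow_ne_zero _ hιx0)
  have hdvd : ∀ z, P ∣ z → φ z = 0 := by
    rintro z ⟨y, rfl⟩; rw [map_mul, hφP, zero_mul]
  have hCc : ∀ a : ℂ, φ (C a) = ι (Polynomial.C a) := by
    intro a
    exact (φ.commutes a).trans (ι.commutes a).symm
  have hφT' : t * φ T' = ι (Polynomial.C c) := by
    have h := hdvd _ hT'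
    simp only [map_mul, map_pow, map_sub, map_add, map_ofNat, hφF, hφv, hCc] at h
    rw [hιx] at h
    linear_combination h
  have hc : c ≠ 0 := by
    rintro rfl
    have h := hdvd _ hS'
    have h0 : φ T' = 0 := by simpa [ht0] using hφT'
    simp [h0] at h
  have hφV : φ V * t ^ 4 = -(ι (Polynomial.C c) ^ 3 * (t + ι (Polynomial.C c))) := by
    have h := hdvd _ hV
    simp only [map_pow, map_add] at h
    rw [← hφT']
    linear_combination t ^ 4 * h
  -- From here on, `w` measures the pole order at `t = ∞`.
  let w := RatFunc.inftyValuation ℂ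
  have hwι : ∀ a : ℂ, w (ι (Polynomial.C a)) ≤ 1 := by
    intro a
    rcases eq_or_ne a 0 with rfl | ha
    · simp
    · exact (RatFunc.inftyValuation.C ℂ ha).le
  have hw : ∀ a : ℂ, w (algebraMap ℂ (RatFunc ℂ) a) ≤ 1 := fun a => by
    rw [← ι.commutes a]; exact hwι a
  have hwt : 1 < w t := by
    have : w t = WithZero.exp 1 := by
      rw [ht]
      exact RatFunc.inftyValuation.X ℂ
    rw [this, ← WithZero.exp_zero, WithZero.exp_lt_exp]; norm_num
  have hw1t : w (1 + t) = w t := w.map_add_eq_of_lt_right (by rwa [map_one])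
  have hwx : w (ι x) = w t ^ 4 := by
    rw [hιx, Valuation.map_neg, map_mul, map_pow, hw1t, ← pow_succ]
  have hwu : w (φ u) ≤ 1 := by
    have h1 : w (t + 2 * t ^ 2 - ι (g.comp x)) ≤ w (ι x) ^ k := by
      rw [hwx, ← pow_mul]
      refine (w.map_sub _ _).trans (max_le ((w.map_add _ _).trans (max_le ?_ ?_)) ?_)
      · exact le_self_pow₀ hwt.le (by omega)
      · rw [map_mul, map_pow]
        have h2 : w 2 ≤ 1 := by simpa only [map_ofNat] using hw 2
        calc w 2 * w t ^ 2 ≤ 1 * w t ^ 2 := by gcongr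
          _ ≤ w t ^ (4 * k) := by rw [one_mul]; exact pow_le_pow_right₀ hwt.le (by omega)
      · rw [← hgx, Polynomial.aeval_eq_sum_range]
        refine w.map_sum_le fun i hi => ?_
        rw [Algebra.smul_def, map_mul, map_pow, hwx, ← pow_mul]
        have hi' := Finset.mem_range.mp hi
        calc _ ≤ 1 * w t ^ (4 * i) := by gcongr; exact hw _
          _ ≤ w t ^ (4 * k) := by rw [one_mul]; exact pow_le_pow_right₀ hwt.le (by omega)
    rw [← hu', map_mul, map_pow] at h1
    have hpos : 0 < w (ι x) ^ k := by
      rw [hwx]; exact pow_pos (pow_pos (zero_lt_one.trans hwt) _) _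
    exact (mul_le_iff_le_one_left hpos).mp h1
  rcases coordinate_dichotomy huv hUV with ⟨a, b, ha, hab⟩ | ⟨q, hq, hqd, hqV⟩
  · have h1 := congrArg φ hab
    rw [map_mul, map_sub, hCc, hCc] at h1
    have hxk : ι x ^ k = t ^ (3 * k) * (-(1 + t)) ^ k := by
      rw [hιx, pow_mul, ← mul_pow]; ring
    have h2 : ι (Polynomial.X ^ (3 * k) * ((-(1 + Polynomial.X)) ^ k *
        (Polynomial.C b * Polynomial.X ^ 4
          - Polynomial.C a * Polynomial.C c ^ 3 * (Polynomial.X + Polynomial.C c)))) =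
        ι (Polynomial.X ^ 4 * (Polynomial.X + 2 * Polynomial.X ^ 2 - g.comp x)) := by
      simp only [map_mul, map_pow, map_sub, map_add, map_neg, map_ofNat, map_one, ← ht]
      rw [← hu', hxk]
      linear_combination t ^ (3 * k) * (-(1 + t)) ^ k *
        (t ^ 4 * h1 - ι (Polynomial.C a) * hφV)
    -- Pole orders at `t = 0` agree only if `3k = 4`.
    have h3 := eq_of_X_pow_mul_eq (hι h2) (by simp [ha, hc]) (by simp [x, hg0])
    omega
  · have h1 : φ V = q.eval₂ (Polynomial.aeval (φ u)).toRingHom (φ v) := by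
      have h2 : (φ : _ →+* RatFunc ℂ).comp (Polynomial.aeval u).toRingHom =
          (Polynomial.aeval (φ u) : Polynomial ℂ →ₐ[ℂ] RatFunc ℂ).toRingHom := by
        refine Polynomial.ringHom_ext (fun c => ?_) ?_
        · have : φ (C c) = algebraMap ℂ _ c := φ.commutes c
          simp [MvPolynomial.algebraMap_eq, this]
        · simp
      rw [← h2, hqV]
      exact Polynomial.hom_eval₂ q (Polynomial.aeval u).toRingHom (φ : _ →+* RatFunc ℂ) v
    have hwV : w (φ V) ≤ 1 := by
      have h2 := congrArg w hφV
      rw [map_mul, map_pow, Valuation.map_neg, map_mul, map_pow] at h2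
      have h3 : w (t + ι (Polynomial.C c)) ≤ w t :=
        (w.map_add _ _).trans (max_le le_rfl ((hwι c).trans hwt.le))
      have h4 : w (φ V) * w t ^ 4 ≤ w t ^ 4 := by
        rw [h2]
        calc _ ≤ 1 ^ 3 * w t := by gcongr; exact hwι c
          _ ≤ w t ^ 4 := by rw [one_pow, one_mul]; exact le_self_pow₀ hwt.le (by norm_num)
      exact (mul_le_iff_le_one_left (pow_pos (zero_lt_one.trans hwt) _)).mp h4
    have h5 := valuation_le_one_of_eval₂_le_one w hw hwu hq hqd (b := φ v) (by rwa [← h1])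
    rw [hφv, hwx] at h5
    exact absurd h5 (not_le.mpr (one_lt_pow₀ hwt (by norm_num)))


/-- Good asymptote, form (ii.3): if `vᵏP = v − 16v² + 4vF − 8vF² + F³ − F⁴` with
`F = uvᵏ + g(v)` and `P` has real coefficients, then `(A/PA)* ≠ ℝ*`. -/
theorem stmt_5 (u v : MvPolynomial (Fin 2) ℂ)
    (huv : Algebra.adjoin ℂ {u, v} = ⊤)
    (k : ℕ) (hk : 1 ≤ k)
    (g : Polynomial ℂ) (hgdeg : g.natDegree ≤ k - 1) (hg0 : Polynomial.eval 0 g = 1)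
    (F : MvPolynomial (Fin 2) ℂ) (hF : F = u * v ^ k + Polynomial.aeval v g)
    (P : MvPolynomial (Fin 2) ℂ)
    (hP : v ^ k * P = v - 16 * v ^ 2 + 4 * v * F - 8 * v * F ^ 2 + F ^ 3 - F ^ 4)
    (P₀ : MvPolynomial (Fin 2) ℝ)
    (hP₀ : MvPolynomial.map (algebraMap ℝ ℂ) P₀ = P) :
    ∃ w : (MvPolynomial (Fin 2) ℝ ⧸ Ideal.span {P₀})ˣ,
      ∀ r : ℝ, (w : MvPolynomial (Fin 2) ℝ ⧸ Ideal.span {P₀}) ≠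
        algebraMap ℝ (MvPolynomial (Fin 2) ℝ ⧸ Ideal.span {P₀}) r := by
  set σ : MvPolynomial (Fin 2) ℂ →+* MvPolynomial (Fin 2) ℂ :=
    MvPolynomial.map (starRingEnd ℂ) with hσ
  have hσσ : ∀ x, σ (σ x) = x := conj_conj_poly
  have hσP : σ P = P := by rw [← hP₀]; exact conj_map_real P₀
  obtain ⟨S, Q, hSQ⟩ := exists_inverse_mod hk hg0 hF hP
  set T := F - 2 * (4 * v + F ^ 2) with hT
  have hSQ' : σ T * σ S + P * σ Q = 1 := by
    rw [← map_one σ, ← hSQ, map_add, map_mul, map_mul, hσP]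
  obtain ⟨N, hN⟩ := exists_real_of_conj_eq (x := T * σ T)
    (by rw [← hσ, map_mul, hσσ, mul_comm])
  obtain ⟨M, hM⟩ := exists_real_of_conj_eq (x := S * σ S)
    (by rw [← hσ, map_mul, hσσ, mul_comm])
  have hNM : P₀ ∣ N * M - 1 := by
    apply dvd_of_map_dvd
    rw [map_sub, map_mul, hN, hM, hP₀, map_one]
    refine ⟨-Q - σ Q + P * Q * σ Q, ?_⟩
    linear_combination (σ T * σ S) * hSQ + (1 - P * Q) * hSQ'
  have hNM' : Ideal.Quotient.mk (Ideal.span {P₀}) N * Ideal.Quotient.mk (Ideal.span {P₀}) M = 1 := by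
    rw [← map_mul, ← map_one (Ideal.Quotient.mk (Ideal.span {P₀})), Ideal.Quotient.eq]
    exact Ideal.mem_span_singleton.mpr hNM
  refine ⟨Units.mkOfMulEqOne _ _ hNM', fun r hr => ?_⟩
  have hNr : P₀ ∣ N - C r := by
    rw [← Ideal.mem_span_singleton, ← Ideal.Quotient.eq]
    exact hr
  have hNr' : P ∣ T * σ T - C (r : ℂ) := by
    have h := map_dvd (MvPolynomial.map (algebraMap ℝ ℂ)) hNr
    rwa [map_sub, hN, hP₀, map_C] at h
  have hV : P ∣ σ v + σ T ^ 3 + σ T ^ 4 := by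
    have h := map_dvd σ (dvd_param_relation hP)
    rwa [hσP, ← hT, map_add, map_add, map_pow, map_pow] at h
  exact no_conj_inverse huv (adjoin_conj_eq_top huv) hk hgdeg hg0 hF hP hV
    (S' := σ S) ⟨-σ Q, by linear_combination hSQ'⟩ hNr'
end

section
/- Suppose u, v ∈ B = ℂ[x,y] generate B as a ℂ-algebra. Let s, p, k ≥ 1 be integers, let g be a univariate polynomial over ℂ of degree at most k−2 (g = 0 when k = 1), set F = u·v^{k−1} + g(v), and suppose P ∈ B satisfies v^{k−1}·P = (1 + v·F^{s+1})ᵖ·F − 1. If all coefficients of P are real (so P ∈ A = ℝ[x,y]), then some unit of the quotient ring A/PA is not the residue class of a real constant (i.e., (A/PA)* ≠ ℝ*). -/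
open MvPolynomial

/-!
Put `N = p(s+1)` and `w = 1 + vF^{s+1}`. Modulo `P` the relation reads `w^p F = 1`, so `w` is a unit
of `B/PB`. Write `b ↦ b̄` for the conjugation of coefficients (`conjHom`). Then `w w̄` has real
coefficients and is a unit of `A/PA` (descent: `dvd_of_map_dvd`). It remains to show that
`w w̄ ≡ r (mod P)` is impossible for a constant `r`.

The curve `P = 0` is parametrised by `w`: there is a `ℂ`-algebra map `θ : B → ℂ(W)` killing `P` with
`w ↦ W`, `F ↦ W^{-p}`, `v ↦ (W - 1)W^N` and `u ↦ (W^{-p} - g(v))/v^{k-1}`.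
If `w w̄ ≡ r` then `θ(w̄) = r/W`, hence `θ(v̄) = (r/W - 1)(r/W)^N`. At `W = ∞`, both `θ(u)` and `θ(v̄)`
are regular, while `θ(v)` has a pole.

Now `(u, v)` and `(ū, v̄)` are both coordinate systems of the plane, so the line `v̄ = 0` is
isomorphic to `𝔸¹` and `u`, `v` restrict to it as univariate polynomials. If `u` is not constant on it,
then `v` is integral over `ℂ[u]` there, so that `v̄`, as a polynomial in `v` over `ℂ[u]`, divides a
monic polynomial and has a constant leading coefficient. If `u` is constant, equal to `c`, on the line,
then `v̄ = α(u - c)`. This is `coord_dichotomy`. In the first case `v` is integral over `ℂ[u, v̄]`,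
which contradicts the pole at infinity. In the second case, applying `θ` yields an identity between
explicit rational functions of `W` which fails on low-order coefficients at `W = 0` (`no_identity`).
-/

/-! ### Coordinate systems of the plane -/

/-- Ring endomorphisms are not linear over the ring, so the module version of this fact
does not apply. -/
lemma injective_of_surjective_ringEnd {R : Type*} [CommRing R] [IsNoetherianRing R]
    (φ : R →+* R) (hφ : Function.Surjective φ) : Function.Injective φ := by
  obtain ⟨n, hn⟩ := monotone_stabilizes_iff_noetherian.2 ‹IsNoetherianRing R›
    ⟨fun n => RingHom.ker (φ ^ n), monotone_nat_of_le_succ fun n x hx => by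
      rw [RingHom.mem_ker] at hx ⊢
      rw [pow_succ', RingHom.mul_def, RingHom.comp_apply, hx, map_zero]⟩
  rw [injective_iff_map_eq_zero]
  intro x hx
  obtain ⟨y, rfl⟩ : ∃ y, (φ ^ n) y = x := by
    rw [RingHom.coe_pow]; exact hφ.iterate n x
  have h : y ∈ RingHom.ker (φ ^ (n + 1)) := by
    rw [RingHom.mem_ker, pow_succ', RingHom.mul_def, RingHom.comp_apply, hx]
  have h2 := hn (n + 1) (Nat.le_succ n)
  simp only [OrderHom.coe_mk] at h2
  rwa [← h2] at h

/-- A pair of generators of `ℂ[x,y]` is algebraically independent, so that `ℂ[x,y]` is the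
polynomial ring `ℂ[u][v]`. -/
lemma exists_coordEquiv {u v : MvPolynomial (Fin 2) ℂ}
    (huv : Algebra.adjoin ℂ {u, v} = ⊤) :
    ∃ f : MvPolynomial (Fin 2) ℂ ≃ₐ[ℂ] Polynomial (Polynomial ℂ),
      f u = Polynomial.C Polynomial.X ∧ f v = Polynomial.X := by
  let φ : MvPolynomial (Fin 2) ℂ →ₐ[ℂ] MvPolynomial (Fin 2) ℂ := aeval ![v, u]
  have hsurj : Function.Surjective φ := by
    rw [← AlgHom.range_eq_top, ← Algebra.adjoin_range_eq_range_aeval]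
    rw [← huv]
    congr 1
    simp [Set.pair_comm]
  have hinj : Function.Injective φ :=
    injective_of_surjective_ringEnd (φ : MvPolynomial (Fin 2) ℂ →+* _) hsurj
  let e := AlgEquiv.ofBijective φ ⟨hinj, hsurj⟩
  let g := (finSuccEquiv ℂ 1).trans (Polynomial.mapAlgEquiv (uniqueAlgEquiv ℂ (Fin 1)))
  have e0 : e (X 0) = v := by simp [e, φ]
  have e1 : e (X 1) = u := by simp [e, φ]
  refine ⟨e.symm.trans g, ?_, ?_⟩
  · rw [AlgEquiv.trans_apply, ← e1, AlgEquiv.symm_apply_apply]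
    simp only [g, AlgEquiv.trans_apply]
    rw [show (1 : Fin 2) = Fin.succ 0 from rfl, finSuccEquiv_X_succ]
    simp
  · rw [AlgEquiv.trans_apply, ← e0, AlgEquiv.symm_apply_apply]
    simp only [g, AlgEquiv.trans_apply]
    rw [finSuccEquiv_X_zero]
    simp

open Polynomial in
/-- `ℂ[X]` is integral over `ℂ[a]` when `a` is not constant. -/
lemma isIntegralElem_aeval_s6 {a : ℂ[X]} (ha : a.natDegree ≠ 0) (b : ℂ[X]) :
    ((aeval a : ℂ[X] →ₐ[ℂ] ℂ[X]) : ℂ[X] →+* ℂ[X]).IsIntegralElem b := by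
  have hX : ((aeval a : ℂ[X] →ₐ[ℂ] ℂ[X]) : ℂ[X] →+* ℂ[X]).IsIntegralElem Polynomial.X := by
    have hd : (a.map Polynomial.C - Polynomial.C Polynomial.X).natDegree = a.natDegree := by
      rw [natDegree_sub_C, natDegree_map_eq_of_injective C_injective]
    have hlc : (a.map Polynomial.C - Polynomial.C Polynomial.X).leadingCoeff =
        Polynomial.C a.leadingCoeff := by
      rw [leadingCoeff, hd, Polynomial.coeff_sub, Polynomial.coeff_map,
        Polynomial.coeff_C_of_ne_zero ha, sub_zero]
      rfl
    have h := RingHom.isIntegralElem_leadingCoeff_mul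
      ((aeval a : ℂ[X] →ₐ[ℂ] ℂ[X]) : ℂ[X] →+* ℂ[X]) (a.map Polynomial.C - Polynomial.C Polynomial.X) Polynomial.X (by
        rw [Polynomial.eval₂_sub, Polynomial.eval₂_map, Polynomial.eval₂_C]
        simp only [RingHom.coe_coe, Polynomial.aeval_X]
        rw [show ((aeval a : ℂ[X] →ₐ[ℂ] ℂ[X]) : ℂ[X] →+* ℂ[X]).comp Polynomial.C = Polynomial.C from
          RingHom.ext fun z => by simp, eval₂_C_X, sub_self])
    rw [hlc] at h
    have h2 := ((RingHom.isIntegralElem_map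
      ((aeval a : ℂ[X] →ₐ[ℂ] ℂ[X]) : ℂ[X] →+* ℂ[X]) (x := Polynomial.C a.leadingCoeff⁻¹))).mul _ h
    have ha' : a.leadingCoeff ≠ 0 := by
      rw [Ne, leadingCoeff_eq_zero]; rintro rfl; simp at ha
    rwa [← mul_assoc, ← map_mul, ← map_mul, inv_mul_cancel₀ ha', map_one, map_one, one_mul] at h2
  induction b using Polynomial.induction_on' with
  | add p q hp hq => exact hp.add _ hq
  | monomial n z =>
    rw [← Polynomial.C_mul_X_pow_eq_monomial]
    have hC : ((aeval a : ℂ[X] →ₐ[ℂ] ℂ[X]) : ℂ[X] →+* ℂ[X]).IsIntegralElem (Polynomial.C z) := by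
      convert RingHom.isIntegralElem_map
        ((aeval a : ℂ[X] →ₐ[ℂ] ℂ[X]) : ℂ[X] →+* ℂ[X]) (x := Polynomial.C z) using 1
      simp
    refine hC.mul _ ?_
    induction n with
    | zero => simpa using RingHom.isIntegralElem_one _
    | succ n ih => rw [pow_succ]; exact ih.mul _ hX

/-- A homomorphism out of `B = ℂ[u][v]` is evaluation at the images of `u` and `v`. -/
lemma coord_hom_apply {L B : Type*} [CommRing L] [Algebra ℂ L] [CommRing B] [Algebra ℂ B]
    (f : B ≃ₐ[ℂ] Polynomial (Polynomial ℂ)) {u v : B}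
    (hu : f u = Polynomial.C Polynomial.X) (hv : f v = Polynomial.X) (h : B →ₐ[ℂ] L) (b : B) :
    h b = (f b).eval₂ ((Polynomial.aeval (h u) : Polynomial ℂ →ₐ[ℂ] L) : Polynomial ℂ →+* L)
      (h v) := by
  have key : (h.comp (f.symm : Polynomial (Polynomial ℂ) →ₐ[ℂ] B) :
      Polynomial (Polynomial ℂ) →+* L) = Polynomial.eval₂RingHom
      ((Polynomial.aeval (h u) : Polynomial ℂ →ₐ[ℂ] L) : Polynomial ℂ →+* L) (h v) := by
    refine Polynomial.ringHom_ext' (Polynomial.ringHom_ext' ?_ ?_) ?_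
    · ext z
      have : (Polynomial.C (Polynomial.C z) : Polynomial (Polynomial ℂ)) = algebraMap ℂ _ z := rfl
      simp only [RingHom.comp_apply, RingHom.coe_coe]
      rw [this, AlgHom.commutes, ← this]
      simp
    · simp [← hu]
    · have : f.symm Polynomial.X = v := by rw [← hv, AlgEquiv.symm_apply_apply]
      simp [this]
  have := congrArg (fun t => t (f b)) key
  simpa using this

open Polynomial in
/-- Let `u, v` be coordinates of the plane (via `f`), and let `v'` belong to another coordinate system
(via `f'`). Either `v'` is an affine function of `u`, or it has positive degree and constant leading
coefficient as a polynomial in `v` over `ℂ[u]`. -/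
lemma coord_dichotomy {B : Type*} [CommRing B] [Algebra ℂ B]
    (f f' : B ≃ₐ[ℂ] ℂ[X][X]) {u v v' : B}
    (hu : f u = Polynomial.C Polynomial.X) (hv : f v = Polynomial.X) (hv' : f' v' = Polynomial.X) :
    (∃ a : ℂ, a ≠ 0 ∧ ∃ c : ℂ, v' = algebraMap ℂ B a * (u - algebraMap ℂ B c)) ∨
      (IsUnit (f v').leadingCoeff ∧ (f v').natDegree ≠ 0) := by
  have hnu : ¬ IsUnit v' := fun h => by
    have := h.map f'
    rw [hv'] at this
    exact not_isUnit_X this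
  -- restriction to the line `v' = 0`, a polynomial ring in one variable
  let τ : B →ₐ[ℂ] ℂ[X] :=
    ((aeval (0 : ℂ[X]) : ℂ[X][X] →ₐ[ℂ[X]] ℂ[X]).restrictScalars ℂ).comp (f' : B →ₐ[ℂ] ℂ[X][X])
  have hτ : ∀ b, τ b = 0 → v' ∣ b := by
    intro b hb
    have hb' : (f' b).coeff 0 = 0 := by
      simpa [τ, coeff_zero_eq_eval_zero] using hb
    rw [← X_dvd_iff, ← hv'] at hb'
    exact (map_dvd_iff f').1 hb'
  by_cases hd : (τ u).natDegree = 0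
  · left
    obtain ⟨c, hc⟩ := natDegree_eq_zero.1 hd
    have hdvd : v' ∣ u - algebraMap ℂ B c := by
      apply hτ
      rw [map_sub, AlgHom.commutes, ← hc]
      exact sub_self _
    have hp : Prime (f (u - algebraMap ℂ B c)) := by
      have : f (u - algebraMap ℂ B c) = Polynomial.C (Polynomial.X - Polynomial.C c) := by
        rw [map_sub, AlgEquiv.commutes, hu, map_sub]; rfl
      rw [this, Polynomial.prime_C_iff]
      exact prime_X_sub_C c
    have hirr := hp.irreducible
    obtain ⟨d, hdd⟩ := hdvd
    rw [hdd, map_mul] at hirr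
    have hdu : IsUnit (f d) := by
      rcases hirr.isUnit_or_isUnit rfl with h | h
      · exact absurd ((MulEquiv.isUnit_map f).1 h) hnu
      · exact h
    obtain ⟨q, hq, hq'⟩ := Polynomial.isUnit_iff.1 hdu
    obtain ⟨z, hz, rfl⟩ := Polynomial.isUnit_iff.1 hq
    have hz0 : z ≠ 0 := hz.ne_zero
    have hd2 : d = algebraMap ℂ B z := by
      apply f.injective
      rw [AlgEquiv.commutes, ← hq']; rfl
    refine ⟨z⁻¹, inv_ne_zero hz0, c, ?_⟩
    rw [hdd, hd2, mul_comm v', ← mul_assoc, ← map_mul, inv_mul_cancel₀ hz0, map_one, one_mul]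
  · right
    obtain ⟨M, hM, hM0⟩ := isIntegralElem_aeval_s6 hd (τ v)
    have h1 : τ (f.symm M) = 0 := by
      rw [coord_hom_apply f hu hv τ, AlgEquiv.apply_symm_apply]
      exact hM0
    have h2 : f v' ∣ M := by
      have := map_dvd f (hτ _ h1)
      rwa [AlgEquiv.apply_symm_apply] at this
    have h3 := hM.isUnit_leadingCoeff_of_dvd h2
    refine ⟨h3, fun h0 => hnu ?_⟩
    rw [← MulEquiv.isUnit_map f, eq_C_of_natDegree_eq_zero h0, isUnit_C]
    rwa [leadingCoeff, h0] at h3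

open Polynomial in
/-- If `Q(x)` lies in the subring `O`, where `Q` has positive degree, coefficients mapping into `O` and
unit leading coefficient, then `x` is integral over `O`, being a root of `Q - Q(x)`. -/
lemma isIntegral_of_eval_mem {L : Type*} [Field L] (O : Subring L) (φ : ℂ[X] →+* L)
    (hφ : ∀ z, φ z ∈ O) (Q : ℂ[X][X]) (hQ : IsUnit Q.leadingCoeff) (hd : Q.natDegree ≠ 0)
    (x : L) (hx : Q.eval₂ φ x ∈ O) : IsIntegral O x := by
  let ψ : ℂ[X] →+* O := φ.codRestrict O hφ
  have hψ : IsUnit (ψ Q.leadingCoeff) := hQ.map ψ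
  have hne : ψ Q.leadingCoeff ≠ 0 := hψ.ne_zero
  let y : O := ⟨_, hx⟩
  have hdeg : (Q.map ψ - Polynomial.C y).natDegree = Q.natDegree := by
    rw [natDegree_sub_C, natDegree_map_of_leadingCoeff_ne_zero _ hne]
  have hlc : (Q.map ψ - Polynomial.C y).leadingCoeff = ψ Q.leadingCoeff := by
    rw [leadingCoeff, hdeg, Polynomial.coeff_sub, Polynomial.coeff_map,
        Polynomial.coeff_C_of_ne_zero hd, sub_zero]
    rfl
  have h := isIntegral_leadingCoeff_smul (Q.map ψ - Polynomial.C y) x (by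
    rw [map_sub, Polynomial.aeval_C, Polynomial.aeval_def, Polynomial.eval₂_map, sub_eq_zero]
    rfl)
  rw [hlc] at h
  obtain ⟨w, hw⟩ := hψ
  have := h.smul (↑w⁻¹ : O)
  rwa [← hw, smul_smul, Units.inv_mul, one_smul] at this

/-! ### Complex conjugation and descent to real coefficients -/

/-- Complex conjugation of the coefficients of a polynomial. -/
noncomputable abbrev conjHom : MvPolynomial (Fin 2) ℂ →+* MvPolynomial (Fin 2) ℂ :=
  MvPolynomial.map (starRingEnd ℂ)

lemma conjHom_conjHom (b : MvPolynomial (Fin 2) ℂ) : conjHom (conjHom b) = b := by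
  ext m
  simp [coeff_map]

lemma conjHom_map (a : MvPolynomial (Fin 2) ℝ) :
    conjHom (map (algebraMap ℝ ℂ) a) = map (algebraMap ℝ ℂ) a := by
  ext m
  simp [coeff_map]

lemma exists_real {b : MvPolynomial (Fin 2) ℂ} (hb : conjHom b = b) :
    ∃ a : MvPolynomial (Fin 2) ℝ, map (algebraMap ℝ ℂ) a = b := by
  have : b ∈ Set.range (MvPolynomial.map (σ := Fin 2) (algebraMap ℝ ℂ)) := by
    rw [mem_range_map_iff_coeffs_subset]
    intro z hz
    obtain ⟨m, -, rfl⟩ := mem_coeffs_iff.1 hz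
    have h := congrArg (coeff m) hb
    rw [coeff_map] at h
    exact ⟨_, Complex.conj_eq_iff_re.1 h⟩
  exact this

lemma dvd_of_map_dvd_s6 {P₀ a : MvPolynomial (Fin 2) ℝ}
    (h : map (algebraMap ℝ ℂ) P₀ ∣ map (algebraMap ℝ ℂ) a) : P₀ ∣ a := by
  have hinj : Function.Injective (map (σ := Fin 2) (algebraMap ℝ ℂ)) :=
    map_injective _ (algebraMap ℝ ℂ).injective
  obtain ⟨q, hq⟩ := h
  by_cases hP : P₀ = 0
  · subst hP
    rw [map_zero, zero_mul] at hq
    rw [hinj (hq.trans (map_zero _).symm)]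
  · have hP' : map (algebraMap ℝ ℂ) P₀ ≠ 0 := fun h0 => hP (hinj (h0.trans (map_zero _).symm))
    have hq2 := congrArg conjHom hq
    rw [map_mul, conjHom_map, conjHom_map, hq] at hq2
    obtain ⟨q₀, rfl⟩ := exists_real (mul_left_cancel₀ hP' hq2).symm
    rw [← map_mul] at hq
    exact ⟨q₀, hinj hq⟩

lemma adjoin_conj {u v : MvPolynomial (Fin 2) ℂ} (huv : Algebra.adjoin ℂ {u, v} = ⊤) :
    Algebra.adjoin ℂ {conjHom u, conjHom v} = ⊤ := by
  rw [eq_top_iff]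
  rintro b -
  have hb : conjHom b ∈ Algebra.adjoin ℂ {u, v} := huv ▸ Algebra.mem_top
  rw [← conjHom_conjHom b]
  generalize conjHom b = b' at hb
  induction hb using Algebra.adjoin_induction with
  | mem x hx =>
    apply Algebra.subset_adjoin
    rcases hx with rfl | rfl
    · exact Or.inl rfl
    · exact Or.inr rfl
  | algebraMap r =>
    rw [MvPolynomial.algebraMap_eq, map_C]
    exact Subalgebra.algebraMap_mem _ _
  | add x y _ _ hx hy => rw [map_add]; exact add_mem hx hy
  | mul x y _ _ hx hy => rw [map_mul]; exact mul_mem hx hy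

/-! ### The parametrised curve -/

open Polynomial in
/-- The identity `θ(v̄) = α(θ(u) - c)` in `ℂ(W)`, after clearing denominators, with `X` in place of `W`
and `(X - 1)X^N` in place of `v`. It is refuted by cancelling a power of `X` and comparing constant
coefficients, except when `k = 2` and `p = 1`, where the coefficients of `X^{N+3}` differ. -/
lemma no_identity {s p k N : ℕ} (hN : N = p * (s + 1)) (hs : 1 ≤ s) (hp : 1 ≤ p) (hk : 1 ≤ k)
    {g : ℂ[X]} {α c r : ℂ} (hα : α ≠ 0) (hr : r ≠ 0)
    (h : (Polynomial.X ^ p * ((Polynomial.X - 1) * Polynomial.X ^ N) ^ (k - 1) *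
      (Polynomial.C r - Polynomial.X) * Polynomial.C r ^ N : ℂ[X]) =
      Polynomial.C α * Polynomial.X ^ (N + 1) *
        (1 - Polynomial.X ^ p * (g + Polynomial.C c * Polynomial.X ^ (k - 1)).comp
          ((Polynomial.X - 1) * Polynomial.X ^ N))) : False := by
  have hX : ∀ n, (Polynomial.X ^ n : ℂ[X]) ≠ 0 := fun n => pow_ne_zero _ Polynomial.X_ne_zero
  have hN2 : p + p ≤ N := by rw [hN]; nlinarith
  obtain ⟨j, rfl⟩ : ∃ j, k = j + 1 := ⟨k - 1, by omega⟩
  rw [Nat.add_sub_cancel] at h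
  obtain ⟨p, rfl⟩ : ∃ q, p = q + 1 := ⟨p - 1, by omega⟩
  set G := (g + Polynomial.C c * Polynomial.X ^ j).comp ((Polynomial.X - 1) * Polynomial.X ^ N) with hG
  rcases j with _ | j
  -- `k = 1`: the lowest-order term on the left has degree `p < N + 1`
  · obtain ⟨d, hd⟩ : ∃ d, N = (p + 1) + d := ⟨N - (p + 1), by omega⟩
    have h1 := mul_left_cancel₀ (hX (p + 1)) (b := (Polynomial.C r - Polynomial.X) * Polynomial.C r ^ N)
      (c := Polynomial.C α * Polynomial.X ^ (d + 1) * (1 - Polynomial.X ^ (p + 1) * G)) (by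
        have e : (Polynomial.X ^ (N + 1) : ℂ[X]) =
            Polynomial.X ^ (p + 1) * Polynomial.X ^ (d + 1) := by rw [← pow_add, hd]; ring
        rw [e] at h
        linear_combination h)
    have h2 := congrArg (Polynomial.eval 0) h1
    simp [hr] at h2
  · by_cases hcase : j = 0 ∧ p = 0
    -- `k = 2`, `p = 1`: after cancelling `X^{N+1}`, the right side has no `X²` term as `N ≥ 2`
    · obtain ⟨rfl, rfl⟩ := hcase
      obtain ⟨d, hd⟩ : ∃ d, N = d + 2 := ⟨N - 2, by omega⟩
      obtain ⟨g', hg'⟩ : ∃ g', g = Polynomial.X * g' + Polynomial.C (g.coeff 0) :=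
        ⟨_, (X_mul_divX_add g).symm⟩
      have h1 := mul_left_cancel₀ (hX (N + 1))
        (b := (Polynomial.X - 1) * (Polynomial.C r - Polynomial.X) * Polynomial.C r ^ N)
        (c := Polynomial.C α * (1 - Polynomial.X * G)) (by linear_combination h)
      have hG' : ∃ T, G = Polynomial.C (g.coeff 0) + Polynomial.X ^ 2 * T := by
        refine ⟨(Polynomial.X - 1) * Polynomial.X ^ d *
          (g'.comp ((Polynomial.X - 1) * Polynomial.X ^ N) + Polynomial.C c), ?_⟩
        rw [hG]
        conv_lhs => rw [hg']
        simp only [add_comp, mul_comp, Polynomial.X_comp, Polynomial.C_comp, pow_comp]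
        rw [hd]
        ring
      obtain ⟨T, hT⟩ := hG'
      have h3 := congrArg (fun q : ℂ[X] => q.coeff 2) h1
      have e1 : (Polynomial.X - 1) * (Polynomial.C r - Polynomial.X) * Polynomial.C r ^ N =
        Polynomial.C (-r ^ N) * Polynomial.X ^ 2 + (Polynomial.C ((r + 1) * r ^ N) * Polynomial.X +
          Polynomial.C (-r * r ^ N)) := by
        simp only [map_neg, map_mul, map_pow, map_add, map_one]; ring
      have e2 : Polynomial.C α * (1 - Polynomial.X * G) = Polynomial.C α +
         (Polynomial.C (-α * g.coeff 0) * Polynomial.X + Polynomial.C (-α) * T * Polynomial.X ^ 3) := by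
        rw [hT]
        simp only [map_neg, map_mul]; ring
      simp only [e1, e2, Polynomial.coeff_add, Polynomial.coeff_C_mul_X, Polynomial.coeff_C,
        Polynomial.coeff_mul_X_pow'] at h3
      simp [hr] at h3
    -- otherwise the left side vanishes to order at least `N + 2`, the right side to order `N + 1`
    · obtain ⟨d, hd⟩ : ∃ d, (p + 1) + N * (j + 1) = (N + 1) + (d + 1) := by
        refine ⟨(p + 1) + N * (j + 1) - (N + 2), ?_⟩
        have : N + 2 ≤ (p + 1) + N * (j + 1) := by
          rcases Nat.eq_zero_or_pos j with rfl | hj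
          · omega
          · nlinarith
        omega
      have h1 := mul_left_cancel₀ (hX (N + 1))
        (b := Polynomial.X ^ (d + 1) * (Polynomial.X - 1) ^ (j + 1) * (Polynomial.C r - Polynomial.X) * Polynomial.C r ^ N)
        (c := Polynomial.C α * (1 - Polynomial.X ^ (p + 1) * G)) (by
          have e : (Polynomial.X ^ (p + 1) * ((Polynomial.X - 1) * Polynomial.X ^ N) ^ (j + 1) : ℂ[X]) =
              Polynomial.X ^ (N + 1) * (Polynomial.X ^ (d + 1) * (Polynomial.X - 1) ^ (j + 1)) := by
            rw [← mul_assoc, ← pow_add, ← hd, mul_pow, ← pow_mul]; ring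
          rw [e] at h
          linear_combination h)
      have h2 := congrArg (Polynomial.eval 0) h1
      simp at h2
      exact hα h2.symm

open Classical in
lemma inftyVal_const (z : ℂ) : RatFunc.inftyValuation ℂ (algebraMap ℂ (RatFunc ℂ) z) ≤ 1 := by
  by_cases hz : z = 0
  · simp [hz]
  · exact (RatFunc.inftyValuation.C ℂ hz).le

open Classical in
lemma inftyVal_aeval_le {x : RatFunc ℂ} (hx : 1 ≤ RatFunc.inftyValuation ℂ x)
    (q : Polynomial ℂ) {n : ℕ} (hn : q.natDegree ≤ n) :
    RatFunc.inftyValuation ℂ (Polynomial.aeval x q) ≤ RatFunc.inftyValuation ℂ x ^ n := by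
  rw [Polynomial.aeval_eq_sum_range]
  refine Valuation.map_sum_le _ fun i hi => ?_
  rw [Algebra.smul_def, map_mul, map_pow]
  refine (mul_le_of_le_one_left' (inftyVal_const _)).trans (pow_le_pow_right₀ hx ?_)
  have := Finset.mem_range.1 hi
  omega

open Classical in
lemma inftyVal_aeval_le_one {x : RatFunc ℂ} (hx : RatFunc.inftyValuation ℂ x ≤ 1)
    (q : Polynomial ℂ) : RatFunc.inftyValuation ℂ (Polynomial.aeval x q) ≤ 1 := by
  rw [Polynomial.aeval_eq_sum_range]
  refine Valuation.map_sum_le _ fun i _ => ?_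
  rw [Algebra.smul_def, map_mul, map_pow]
  exact mul_le_one' (inftyVal_const _) (pow_le_one₀ zero_le hx)

open Classical in
/-- The unit `w w̄` is not a constant modulo `P`. -/
lemma norm_not_constant {u v : MvPolynomial (Fin 2) ℂ}
    (huv : Algebra.adjoin ℂ {u, v} = ⊤)
    {s p k : ℕ} (hs : 1 ≤ s) (hp : 1 ≤ p) (hk : 1 ≤ k)
    {g : Polynomial ℂ} (hgdeg : g.natDegree ≤ k - 2)
    {F : MvPolynomial (Fin 2) ℂ} (hF : F = u * v ^ (k - 1) + Polynomial.aeval v g)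
    {P : MvPolynomial (Fin 2) ℂ}
    (hP : v ^ (k - 1) * P = (1 + v * F ^ (s + 1)) ^ p * F - 1)
    (hPc : conjHom P = P) (r : ℂ)
    (hdvd : P ∣ (1 + v * F ^ (s + 1)) * conjHom (1 + v * F ^ (s + 1)) - C r) : False := by
  obtain ⟨f, hfu, hfv⟩ := exists_coordEquiv huv
  obtain ⟨f', -, hfv'⟩ := exists_coordEquiv (adjoin_conj huv)
  let W : RatFunc ℂ := RatFunc.X
  have hW : W ≠ 0 := RatFunc.X_ne_zero
  obtain ⟨N, hN⟩ : ∃ N, N = p * (s + 1) := ⟨_, rfl⟩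
  have hWN : W ^ N * W⁻¹ ^ N = 1 := by rw [← mul_pow, mul_inv_cancel₀ hW, one_pow]
  let V : RatFunc ℂ := (W - 1) * W ^ N
  have hVpoly : V = algebraMap (Polynomial ℂ) (RatFunc ℂ)
      ((Polynomial.X - Polynomial.C 1) * Polynomial.X ^ N) := by
    simp [V, W, RatFunc.algebraMap_X]
  have hne : ((Polynomial.X - Polynomial.C 1) * Polynomial.X ^ N : Polynomial ℂ) ≠ 0 :=
    ((Polynomial.monic_X_sub_C 1).mul (Polynomial.monic_X_pow N)).ne_zero
  have hV : V ≠ 0 := by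
    rw [hVpoly]
    exact (map_ne_zero_iff _ (RatFunc.algebraMap_injective ℂ)).2 hne
  let ν := RatFunc.inftyValuation ℂ
  have hνV : 1 < ν V := by
    rw [hVpoly, RatFunc.inftyValuation_apply, RatFunc.inftyValuation.polynomial ℂ hne,
      (Polynomial.monic_X_sub_C (1 : ℂ)).natDegree_mul (Polynomial.monic_X_pow N),
      Polynomial.natDegree_X_sub_C, Polynomial.natDegree_X_pow, ← WithZero.exp_zero,
      WithZero.exp_lt_exp]
    positivity
  have hνW : ν W⁻¹ ≤ 1 := by
    have := RatFunc.inftyValuation.X_inv ℂ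
    rw [one_div] at this
    change ν W⁻¹ = _ at this
    rw [this, ← WithZero.exp_zero, WithZero.exp_le_exp]
    norm_num
  let U : RatFunc ℂ := (W⁻¹ ^ p - Polynomial.aeval V g) / V ^ (k - 1)
  have hνU : ν U ≤ 1 := by
    rw [map_div₀, map_pow]
    apply div_le_one_of_le₀ _ zero_le
    refine (Valuation.map_sub _ _ _).trans (max_le ?_ (inftyVal_aeval_le hνV.le g (by omega)))
    rw [map_pow]
    exact (pow_le_one₀ zero_le hνW).trans (one_le_pow₀ hνV.le)
  -- `θ` parametrises the curve `P = 0` by the value `W` of `1 + vF^{s+1}`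
  let E : Polynomial (Polynomial ℂ) →ₐ[ℂ] RatFunc ℂ :=
    Polynomial.eval₂AlgHom (Polynomial.aeval U) V (fun _ => Commute.all _ _)
  let θ : MvPolynomial (Fin 2) ℂ →ₐ[ℂ] RatFunc ℂ := E.comp (f : _ →ₐ[ℂ] _)
  have hθu : θ u = U := by simp [θ, E, hfu]
  have hθv : θ v = V := by simp [θ, E, hfv]
  have hθF : θ F = W⁻¹ ^ p := by
    rw [hF, map_add, map_mul, map_pow, hθu, hθv, ← Polynomial.aeval_algHom_apply, hθv]
    simp only [U]
    field_simp
    ring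
  have hθw : θ (1 + v * F ^ (s + 1)) = W := by
    rw [map_add, map_mul, map_pow, hθv, hθF, map_one, ← pow_mul, ← hN]
    linear_combination (W - 1) * hWN
  have hθP : θ P = 0 := by
    have h := congrArg θ hP
    rw [map_mul, map_pow, hθv, map_sub, map_mul, map_pow, hθw, hθF, map_one, inv_pow,
      mul_inv_cancel₀ (pow_ne_zero _ hW), sub_self] at h
    exact (mul_eq_zero.1 h).resolve_left (pow_ne_zero _ hV)
  have hθwc : W * θ (conjHom (1 + v * F ^ (s + 1))) = algebraMap ℂ _ r := by
    obtain ⟨d, hd⟩ := hdvd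
    have h := congrArg θ hd
    rw [map_mul, hθP, zero_mul, map_sub, map_mul, hθw, sub_eq_zero] at h
    rw [h]
    exact θ.commutes r
  have hPc' := congrArg (fun t => θ (conjHom t)) hP
  simp only [map_mul, map_sub, map_pow, hPc, hθP, mul_zero, map_one] at hPc'
  set w' := θ (conjHom (1 + v * F ^ (s + 1))) with hw'
  set F' := θ (conjHom F) with hF'
  have hwF : w' ^ p * F' = 1 := (sub_eq_zero.1 hPc'.symm)
  have hw0 : w' ≠ 0 := by
    intro h
    rw [h, zero_pow (by omega), zero_mul] at hwF
    exact zero_ne_one hwF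
  have hr : r ≠ 0 := by
    rintro rfl
    rw [map_zero] at hθwc
    exact (mul_ne_zero hW hw0) hθwc
  have hw1 : w' = algebraMap ℂ _ r * W⁻¹ := by
    rw [← hθwc]; field_simp
  have hv1 : θ (conjHom v) = (w' - 1) * w' ^ N := by
    have h1 : w' = 1 + θ (conjHom v) * F' ^ (s + 1) := by
      rw [hw', hF']; simp only [map_add, map_mul, map_pow, map_one]
    have h2 : w' - 1 = θ (conjHom v) * F' ^ (s + 1) := by linear_combination h1
    have h3 : w' ^ N * F' ^ (s + 1) = 1 := by rw [hN, pow_mul, ← mul_pow, hwF, one_pow]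
    rw [h2]
    linear_combination (-θ (conjHom v)) * h3
  have hνw : ν w' ≤ 1 := by
    rw [hw1, map_mul]
    exact mul_le_one' (inftyVal_const r) hνW
  have hνv : ν (θ (conjHom v)) ≤ 1 := by
    rw [hv1, map_mul, map_pow]
    refine mul_le_one' ?_ (pow_le_one₀ zero_le hνw)
    exact (Valuation.map_sub _ _ _).trans (max_le hνw (map_one ν).le)
  rcases coord_dichotomy f f' hfu hfv hfv' with ⟨α, hα, c, hc⟩ | ⟨hlc, hdeg⟩
  · have h1 := congrArg θ hc
    rw [map_mul, map_sub, AlgHom.commutes, AlgHom.commutes, hθu, hv1, hw1] at h1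
    refine no_identity hN hs hp hk (g := g) (c := c) hα hr (RatFunc.algebraMap_injective ℂ ?_)
    have hcomp : algebraMap (Polynomial ℂ) (RatFunc ℂ)
        ((g + Polynomial.C c * Polynomial.X ^ (k - 1)).comp
          ((Polynomial.X - 1) * Polynomial.X ^ N)) =
        Polynomial.aeval V g + algebraMap ℂ _ c * V ^ (k - 1) := by
      rw [Polynomial.comp_eq_aeval, ← Polynomial.aeval_algebraMap_apply, ← Polynomial.C_1,
        ← hVpoly]
      simp
    have hC : ∀ z, algebraMap (Polynomial ℂ) (RatFunc ℂ) (Polynomial.C z) = algebraMap ℂ _ z :=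
      fun z => rfl
    simp only [map_mul, map_sub, map_pow, map_one, hcomp, RatFunc.algebraMap_X, hC]
    change W ^ p * V ^ (k - 1) * (algebraMap ℂ _ r - W) * algebraMap ℂ _ r ^ N =
      algebraMap ℂ _ α * W ^ (N + 1) * (1 - W ^ p * _)
    have hUV : U * V ^ (k - 1) = W⁻¹ ^ p - Polynomial.aeval V g :=
      div_mul_cancel₀ _ (pow_ne_zero _ hV)
    have hWp : W ^ p * W⁻¹ ^ p = 1 := by rw [← mul_pow, mul_inv_cancel₀ hW, one_pow]
    have hW1 : W * W⁻¹ = 1 := mul_inv_cancel₀ hW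
    have h2 : (algebraMap ℂ (RatFunc ℂ) r - W) * algebraMap ℂ _ r ^ N =
        W ^ (N + 1) * (algebraMap ℂ _ α * (U - algebraMap ℂ _ c)) := by
      rw [← h1, mul_pow]
      linear_combination (-(algebraMap ℂ (RatFunc ℂ) r - W) * algebraMap ℂ (RatFunc ℂ) r ^ N) * hWN -
        (algebraMap ℂ (RatFunc ℂ) r * algebraMap ℂ (RatFunc ℂ) r ^ N * (W ^ N * W⁻¹ ^ N)) * hW1
    have h3 : V ^ (k - 1) * (U - algebraMap ℂ _ c) * W ^ p =
        1 - W ^ p * (Polynomial.aeval V g + algebraMap ℂ _ c * V ^ (k - 1)) := by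
      linear_combination W ^ p * hUV + hWp
    rw [← h3, mul_assoc, h2]
    ring
  · have hint : IsIntegral ν.integer V := by
      refine isIntegral_of_eval_mem ν.integer
        ((Polynomial.aeval U : Polynomial ℂ →ₐ[ℂ] RatFunc ℂ) : Polynomial ℂ →+* RatFunc ℂ)
        (fun z => inftyVal_aeval_le_one hνU z) (f (conjHom v)) hlc hdeg V ?_
      have := coord_hom_apply f hfu hfv θ (conjHom v)
      rw [hθu, hθv] at this
      rw [← this]
      exact hνv
    have := (Valuation.integer.integers ν).mem_of_integral hint
    exact absurd this (not_le.2 hνV)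

/-- Good asymptote, form (ii.4): if `v^{k−1}P = (1 + vF^{s+1})ᵖF − 1` with
`F = uv^{k−1} + g(v)` and `P` has real coefficients, then `(A/PA)* ≠ ℝ*`. -/
theorem stmt_6 (u v : MvPolynomial (Fin 2) ℂ)
    (huv : Algebra.adjoin ℂ {u, v} = ⊤)
    (s p k : ℕ) (hs : 1 ≤ s) (hp : 1 ≤ p) (hk : 1 ≤ k)
    (g : Polynomial ℂ) (hgdeg : g.natDegree ≤ k - 2) (hg1 : k = 1 → g = 0)
    (F : MvPolynomial (Fin 2) ℂ) (hF : F = u * v ^ (k - 1) + Polynomial.aeval v g)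
    (P : MvPolynomial (Fin 2) ℂ)
    (hP : v ^ (k - 1) * P = (1 + v * F ^ (s + 1)) ^ p * F - 1)
    (P₀ : MvPolynomial (Fin 2) ℝ)
    (hP₀ : MvPolynomial.map (algebraMap ℝ ℂ) P₀ = P) :
    ∃ w : (MvPolynomial (Fin 2) ℝ ⧸ Ideal.span {P₀})ˣ,
      ∀ r : ℝ, (w : MvPolynomial (Fin 2) ℝ ⧸ Ideal.span {P₀}) ≠
        algebraMap ℝ (MvPolynomial (Fin 2) ℝ ⧸ Ideal.span {P₀}) r := by
  have hPc : conjHom P = P := by rw [← hP₀, conjHom_map]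
  obtain ⟨w, hw⟩ : ∃ w, w = 1 + v * F ^ (s + 1) := ⟨_, rfl⟩
  obtain ⟨i, hi⟩ : ∃ i, i = w ^ (p - 1) * F := ⟨_, rfl⟩
  have hwi : w * i = 1 + v ^ (k - 1) * P := by
    rw [hP, hi, ← hw, ← mul_assoc, mul_pow_sub_one (by omega)]; ring
  have hself : ∀ b, conjHom (b * conjHom b) = b * conjHom b := fun b => by
    rw [map_mul, conjHom_conjHom, mul_comm]
  obtain ⟨n, hn⟩ := exists_real (hself w)
  obtain ⟨m, hm⟩ := exists_real (hself i)
  have hnm : P₀ ∣ n * m - 1 := by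
    apply dvd_of_map_dvd_s6
    rw [map_sub, map_mul, hn, hm, map_one, hP₀]
    have h1 : conjHom w * conjHom i = 1 + conjHom v ^ (k - 1) * P := by
      rw [← map_mul, hwi, map_add, map_mul, map_pow, hPc, map_one]
    refine ⟨v ^ (k - 1) + conjHom v ^ (k - 1) + v ^ (k - 1) * conjHom v ^ (k - 1) * P, ?_⟩
    linear_combination (conjHom w * conjHom i) * hwi + (1 + v ^ (k - 1) * P) * h1
  have hunit : (Ideal.Quotient.mk (Ideal.span {P₀}) n) * Ideal.Quotient.mk _ m = 1 := by
    rw [← map_mul, ← map_one (Ideal.Quotient.mk (Ideal.span {P₀})), Ideal.Quotient.eq,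
      Ideal.mem_span_singleton]
    exact hnm
  refine ⟨Units.mkOfMulEqOne _ _ hunit, fun r hr => ?_⟩
  have hr' : Ideal.Quotient.mk (Ideal.span {P₀}) n = Ideal.Quotient.mk _ (C r) := hr
  rw [Ideal.Quotient.eq, Ideal.mem_span_singleton] at hr'
  refine norm_not_constant huv hs hp hk hgdeg hF hP hPc (r : ℂ) ?_
  rw [← hw]
  have := map_dvd (map (algebraMap ℝ ℂ)) hr'
  rwa [map_sub, hn, hP₀, map_C] at this
end
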